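/- Let N = 2n+1 = p + q with integers p > q ≥ 0, set κ = N/2 − 1 and c = 4/(p−q), and define the rational functions T(u) = (N−2q)(N−4u)/(N−2q−4u), p(u) = 1 − 1/(2u−κ) + T(u)/(2u−2κ), and p₀(u) = 1 − 1/(2u−κ) + N/(2u−2κ). Then in ℂ(u): p₀(u)·p(u)^{−1} = (2u−κ+1)(κ+1−q−2u)/((2u−κ−1)(κ−1+q−2u)); consequently, for g(u) = (p+q−4u)/(p−q−4u) one has p₀(u)·p(u)^{−1} = g(κ−u)·g(u)^{−1}. -/

import Mathlib

/-!
Write `x = 2u`, so that `N = 2κ + 2`, and put `a = κ + 1 - q`. Over the common denominators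
the two numerators factor completely:

* `p₀(u) = x (x - κ + 1) / ((x - κ)(x - 2κ))`,
* `p(u) = x (x - κ - 1)(κ - 1 + q - x) / ((a - x)(x - κ)(x - 2κ))`.

Dividing cancels `x (x - κ)(x - 2κ)` and gives the explicit formula. Since
`g(u) = (κ + 1 - x) / (a - x)` and `g(κ - u) = (x - κ + 1) / (x - (κ - 1 + q))`, the quotient
`g(κ - u) / g(u)` is the same rational function. Every factor occurring in a denominator is
`± (x - constant)`, hence nonzero in `ℂ(u)` by `two_X_sub_C_ne_zero`.
-/

set_option maxHeartbeats 1000000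
set_option synthInstance.maxHeartbeats 400000

noncomputable section

/-- `T(u) = (N-2q)(N-4u)/(N-2q-4u)`, the trace of the second-kind K-matrix of
type BI, evaluated at `w ∈ ℂ(u)`. -/
def TBI (Nc qc : ℂ) (w : RatFunc ℂ) : RatFunc ℂ :=
  (RatFunc.C (Nc - 2 * qc) * (RatFunc.C Nc - 4 * w)) / (RatFunc.C (Nc - 2 * qc) - 4 * w)

/-- `p(u) = 1 - 1/(2u-κ) + T(u)/(2u-2κ)` for type BI. -/
def pBI (Nc qc κ : ℂ) (w : RatFunc ℂ) : RatFunc ℂ :=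
  1 - 1 / (2 * w - RatFunc.C κ) + TBI Nc qc w / (2 * w - 2 * RatFunc.C κ)

/-- `p₀(u) = 1 - 1/(2u-κ) + N/(2u-2κ)`, the function for the pair
`(so_{2n+1}, so_{2n+1})`. -/
def pZero (Nc κ : ℂ) (w : RatFunc ℂ) : RatFunc ℂ :=
  1 - 1 / (2 * w - RatFunc.C κ) + RatFunc.C Nc / (2 * w - 2 * RatFunc.C κ)

/-- `g(u) = (p+q-4u)/(p-q-4u)` of Remark 4.3. -/
def gBI (pc qc : ℂ) (w : RatFunc ℂ) : RatFunc ℂ :=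
  (RatFunc.C (pc + qc) - 4 * w) / (RatFunc.C (pc - qc) - 4 * w)

/-- The polynomial `2u - a` takes the value `1` at `u = (a + 1) / 2`, so it is nonzero, and
polynomials embed in rational functions. -/
lemma two_X_sub_C_ne_zero (a : ℂ) : 2 * (RatFunc.X : RatFunc ℂ) - RatFunc.C a ≠ 0 := by
  intro h
  have h2 : (2 * Polynomial.X - Polynomial.C a : Polynomial ℂ) = 0 := by
    apply RatFunc.algebraMap_injective ℂ
    have e2 : algebraMap (Polynomial ℂ) (RatFunc ℂ) 2 = 2 := map_ofNat _ 2
    simpa [e2] using h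
  have h3 := congrArg (Polynomial.eval ((a + 1) / 2)) h2
  simp at h3
  ring_nf at h3
  exact one_ne_zero h3

/-- Remark 4.3, including formula (4.12):
`p₀(u)p(u)⁻¹ = (2u-κ+1)(κ+1-q-2u)/((2u-κ-1)(κ-1+q-2u))`, and hence
`p₀(u)p(u)⁻¹ = g(κ-u)g(u)⁻¹`. -/
theorem stmt7 (p q n : ℕ) (hN : 2 * n + 1 = p + q) (hpq : q < p)
    (κ c : ℂ) (hκ : κ = ((2 * n + 1 : ℕ) : ℂ) / 2 - 1)
    (hc : c = 4 / ((p : ℂ) - (q : ℂ))) :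
    pZero ((p : ℂ) + (q : ℂ)) κ RatFunc.X * (pBI ((p : ℂ) + (q : ℂ)) (q : ℂ) κ RatFunc.X)⁻¹
        = ((2 * RatFunc.X - RatFunc.C κ + 1) * (RatFunc.C κ + 1 - RatFunc.C (q : ℂ) - 2 * RatFunc.X))
          / ((2 * RatFunc.X - RatFunc.C κ - 1) * (RatFunc.C κ - 1 + RatFunc.C (q : ℂ) - 2 * RatFunc.X)) ∧
    pZero ((p : ℂ) + (q : ℂ)) κ RatFunc.X * (pBI ((p : ℂ) + (q : ℂ)) (q : ℂ) κ RatFunc.X)⁻¹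
        = gBI (p : ℂ) (q : ℂ) (RatFunc.C κ - RatFunc.X) * (gBI (p : ℂ) (q : ℂ) RatFunc.X)⁻¹ := by
  have hp : (p : ℂ) = 2 * κ + 2 - q := by
    have h : ((2 * n + 1 : ℕ) : ℂ) = p + q := by rw [hN]; push_cast; ring
    rw [hκ, h]; ring
  have h0 := two_X_sub_C_ne_zero 0
  have h1 := two_X_sub_C_ne_zero κ
  have h2 := two_X_sub_C_ne_zero (2 * κ)
  have h3 := two_X_sub_C_ne_zero (κ + 1)
  have h4 := two_X_sub_C_ne_zero (κ - 1 + q)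
  have h5 := two_X_sub_C_ne_zero (κ + 1 - q)
  rw [hp]
  generalize (q : ℂ) = Q at *
  have e2 : (RatFunc.C (2 : ℂ)) = 2 := map_ofNat _ 2
  simp only [pZero, pBI, TBI, gBI, map_add, map_sub, map_mul, map_one, map_zero, e2, sub_zero]
    at h0 h1 h2 h3 h4 h5 ⊢
  have h20 : (2 : RatFunc ℂ) ≠ 0 := two_ne_zero
  generalize (RatFunc.X : RatFunc ℂ) = u at *
  generalize RatFunc.C κ = k at *
  generalize RatFunc.C Q = r at *
  have hzero : 1 - 1 / (2 * u - k) + (2 * k + 2 - r + r) / (2 * u - 2 * k)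
      = 2 * u * (2 * u - k + 1) / ((2 * u - k) * (2 * u - 2 * k)) := by
    rw [sub_div' h1, div_add_div _ _ h1 h2,
      div_eq_div_iff (mul_ne_zero h1 h2) (mul_ne_zero h1 h2)]
    ring
  have hT : (2 * k + 2 - r + r - 2 * r) * (2 * k + 2 - r + r - 4 * u)
      / (2 * k + 2 - r + r - 2 * r - 4 * u)
      = 2 * (k + 1 - r) * (2 * u - (k + 1)) / (2 * u - (k + 1 - r)) := by
    rw [div_eq_div_iff _ h5]
    · ring
    · convert mul_ne_zero (neg_ne_zero.mpr h20) h5 using 1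
      ring
  have hBI : 1 - 1 / (2 * u - k)
      + 2 * (k + 1 - r) * (2 * u - (k + 1)) / (2 * u - (k + 1 - r)) / (2 * u - 2 * k)
      = 2 * u * (2 * u - (k + 1)) * (2 * u - (k - 1 + r))
        / ((2 * u - (k + 1 - r)) * (2 * u - k) * (2 * u - 2 * k)) := by
    rw [sub_div' h1, div_div, div_add_div _ _ h1 (mul_ne_zero h5 h2),
      div_eq_div_iff (mul_ne_zero h1 (mul_ne_zero h5 h2)) (mul_ne_zero (mul_ne_zero h5 h1) h2)]
    ring
  have hg : (2 * k + 2 - r + r - 4 * u) / (2 * k + 2 - r - r - 4 * u)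
      = (2 * u - (k + 1)) / (2 * u - (k + 1 - r)) := by
    rw [div_eq_div_iff _ h5]
    · ring
    · convert mul_ne_zero (neg_ne_zero.mpr h20) h5 using 1
      ring
  have hg' : (2 * k + 2 - r + r - 4 * (k - u)) / (2 * k + 2 - r - r - 4 * (k - u))
      = (2 * u - k + 1) / (2 * u - (k - 1 + r)) := by
    rw [div_eq_div_iff _ h4]
    · ring
    · convert mul_ne_zero h20 h4 using 1
      ring
  rw [hzero, hT, hBI, hg, hg',
    show k + 1 - r - 2 * u = -(2 * u - (k + 1 - r)) by ring,
    show k - 1 + r - 2 * u = -(2 * u - (k - 1 + r)) by ring,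
    show 2 * u - k - 1 = 2 * u - (k + 1) by ring]
  have hu : u ≠ 0 := right_ne_zero_of_mul h0
  -- With the linear factors as atoms, only cancellation of nonzero factors remains.
  generalize 2 * u - (k + 1 - r) = D at *
  generalize 2 * u - (k - 1 + r) = E at *
  generalize 2 * u - (k + 1) = F at *
  generalize 2 * u - k + 1 = G at *
  generalize 2 * u - 2 * k = B at *
  generalize 2 * u - k = A at *
  constructor <;> field_simp
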